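/- Let m ≥ 1 and let H be a finitely generated subgroup of the free group F_m. Then the cogrowth series H(z) = Σ_{n≥0} |H_n| zⁿ is rational: there exist polynomials p and q with rational coefficients, q having nonzero constant term, such that q(z) · Σ_{n≥0} |H_n| zⁿ = p(z) in the ring of formal power series. -/

import Mathlib

/-- `|H_n|`: the number of elements of the subgroup `H` of the free group `F_m`
whose reduced word length is `n` (equivalently, the number of words of length `n`
in the language `L_H` of reduced words representing elements of `H`). -/
noncomputable def cogrowthCoeff (m : ℕ) (H : Subgroup (FreeGroup (Fin m))) (n : ℕ) : ℕ :=
  Nat.card {g : FreeGroup (Fin m) // g ∈ H ∧ (FreeGroup.toWord g).length = n}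

open Polynomial Matrix in
/-- The generating functions of the coordinates of a sequence of vectors satisfying a
first-order linear recurrence are rational, with the reversed characteristic polynomial as
common denominator. -/
theorem Matrix.exists_charpolyRev_mul_mk_eq {R σ : Type*} [CommRing R] [Fintype σ]
    [DecidableEq σ] (M : Matrix σ σ R) (a : ℕ → σ → R) (ha : ∀ n, a (n + 1) = M *ᵥ a n) (s : σ) :
    ∃ p : R[X], (M.charpolyRev : PowerSeries R) * PowerSeries.mk (fun n => a n s) = p := by
  let φ : R[X] →+* PowerSeries R := Polynomial.coeToPowerSeries.ringHom
  let B : Matrix σ σ R[X] := 1 - (X : R[X]) • M.map C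
  let A : σ → PowerSeries R := fun t => PowerSeries.mk (fun n => a n t)
  have hB : φ.mapMatrix B *ᵥ A = fun t => φ (C (a 0 t)) := by
    have hφB : φ.mapMatrix B = 1 - (PowerSeries.X : PowerSeries R) • M.map PowerSeries.C := by
      ext1 i j
      simp [B, φ, Matrix.one_apply, apply_ite]
      exact mul_comm _ _
    rw [hφB, Matrix.sub_mulVec, Matrix.one_mulVec, Matrix.smul_mulVec]
    ext t n
    cases n with
    | zero => simp [A, φ]
    | succ n =>
      simp [A, φ, PowerSeries.coeff_succ_X_mul, Matrix.mulVec, dotProduct, ha]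
  refine ⟨(B.adjugate *ᵥ fun t => C (a 0 t)) s, ?_⟩
  have key : φ.mapMatrix B.adjugate *ᵥ (φ.mapMatrix B *ᵥ A) = φ B.det • A := by
    rw [Matrix.mulVec_mulVec, ← map_mul, Matrix.adjugate_mul, RingHom.mapMatrix_apply,
      Matrix.map_smul' _ _ _ (map_mul φ), Matrix.map_one _ (map_zero φ) (map_one φ),
      Matrix.smul_mulVec, Matrix.one_mulVec]
  rw [hB] at key
  change φ B.det * A s = φ ((B.adjugate *ᵥ fun t => C (a 0 t)) s)
  rw [RingHom.map_mulVec]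
  exact (congrFun key s).symm

/-- The number of words of length `n + 1` accepted from a state of a deterministic automaton
is the sum, over the letters, of the numbers of words of length `n` accepted from the
successor states. -/
theorem DFA.card_acceptsFrom_length_succ {α σ : Type*} [Fintype α] (M : DFA α σ) (s : σ)
    (n : ℕ) :
    Nat.card {w : List α // w ∈ M.acceptsFrom s ∧ w.length = n + 1} =
      ∑ c, Nat.card {w : List α // w ∈ M.acceptsFrom (M.step s c) ∧ w.length = n} := by
  have hfin (c : α) :
      Finite {w : List α // w ∈ M.acceptsFrom (M.step s c) ∧ w.length = n} :=
    ((List.finite_length_eq α n).subset fun _ h => h.2).to_subtype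
  rw [← Nat.card_sigma]
  symm
  refine Nat.card_congr (Equiv.ofBijective
    (fun x => ⟨x.1 :: x.2.1, x.2.2.1, by simp [x.2.2.2]⟩) ⟨?_, ?_⟩)
  · rintro ⟨c, w, hw⟩ ⟨d, v, hv⟩ h
    obtain ⟨rfl, rfl⟩ : c = d ∧ w = v := by simpa using h
    rfl
  · rintro ⟨_ | ⟨c, w⟩, hw, hn⟩
    · simp at hn
    · exact ⟨⟨c, w, hw, by simpa using hn⟩, rfl⟩

/-- The generating function counting the words of a regular language by length is rational. -/
theorem Language.IsRegular.exists_mul_mk_card_eq {α : Type*} [Fintype α] {L : Language α}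
    (hL : L.IsRegular) :
    ∃ p q : Polynomial ℚ, q.coeff 0 ≠ 0 ∧
      (q : PowerSeries ℚ) *
        PowerSeries.mk (fun n => (Nat.card {w : List α // w ∈ L ∧ w.length = n} : ℚ)) = p := by
  classical
  obtain ⟨σ, _, D, rfl⟩ := hL
  let M : Matrix σ σ ℚ := .of fun s t => ∑ c, if D.step s c = t then 1 else 0
  obtain ⟨p, hp⟩ := M.exists_charpolyRev_mul_mk_eq
    (fun n s => (Nat.card {w : List α // w ∈ D.acceptsFrom s ∧ w.length = n} : ℚ))
    (fun n => by
      ext s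
      simp only [D.card_acceptsFrom_length_succ, M, Matrix.mulVec, Matrix.of_apply, dotProduct, Finset.sum_mul]
      rw [Finset.sum_comm]
      simp) D.start
  refine ⟨p, M.charpolyRev, ?_, hp⟩
  rw [Polynomial.coeff_zero_eq_eval_zero, Matrix.eval_charpolyRev]
  exact one_ne_zero

theorem List.prefix_append_iff_exists {α : Type*} {l l₁ l₂ : List α} :
    l <+: l₁ ++ l₂ ↔ l <+: l₁ ∨ ∃ r, r <+: l₂ ∧ l = l₁ ++ r := by
  constructor
  · rintro ⟨t, ht⟩
    rcases List.append_eq_append_iff.mp ht with ⟨r, h, _⟩ | ⟨r, h, h'⟩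
    · exact Or.inl ⟨r, h.symm⟩
    · exact Or.inr ⟨r, ⟨t, h'.symm⟩, h⟩
  · rintro (h | ⟨r, h, rfl⟩)
    · exact List.prefix_append_of_prefix h
    · simpa using h

namespace FreeGroup

variable {α : Type*}

/-- The vertex of the Schreier graph of `H` reached from the base point by reading `w`,
recorded as the left coset of the inverse of the element that `w` represents. -/
def schreierVertex (H : Subgroup (FreeGroup α)) (w : List (α × Bool)) : FreeGroup α ⧸ H :=
  ((mk w)⁻¹ : FreeGroup α)

/-- The path in the Schreier graph of `H` that starts at the base point and is labelled by `w`
stays in the set `V` of vertices. -/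
def PathIn (H : Subgroup (FreeGroup α)) (V : Set (FreeGroup α ⧸ H)) (w : List (α × Bool)) :
    Prop :=
  ∀ p, p <+: w → schreierVertex H p ∈ V

variable {H : Subgroup (FreeGroup α)} {V : Set (FreeGroup α ⧸ H)} {v w : List (α × Bool)}

theorem mk_append_mem_iff : mk (v ++ w) ∈ H ↔ schreierVertex H v = (mk w : FreeGroup α) := by
  rw [schreierVertex, QuotientGroup.eq, inv_inv, mul_mk]

theorem PathIn.of_red (hw : PathIn H V w) (h : Red w v) : PathIn H V v := by
  induction h with
  | refl => exact hw
  | tail _ hstep ih =>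
    obtain @⟨L₁, L₂, x, b⟩ := hstep
    intro p hp
    rcases List.prefix_append_iff_exists.mp hp with hp | ⟨r, hr, rfl⟩
    · exact ih p (List.prefix_append_of_prefix hp)
    · have := ih (L₁ ++ (x, b) :: (x, !b) :: r) (by simpa using hr)
      have heq : mk (L₁ ++ (x, b) :: (x, !b) :: r) = mk (L₁ ++ r) :=
        Quot.sound Red.Step.not
      rwa [schreierVertex, heq] at this

theorem PathIn.append (hv : PathIn H V v) (hw : PathIn H V w) (h : mk v ∈ H) :
    PathIn H V (v ++ w) := by
  intro p hp
  rcases List.prefix_append_iff_exists.mp hp with hp | ⟨r, hr, rfl⟩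
  · exact hv p hp
  · convert hw r hr using 1
    rw [schreierVertex, schreierVertex, QuotientGroup.eq, ← mul_mk]
    rwa [inv_inv, mul_inv_cancel_right]

theorem PathIn.invRev (hw : PathIn H V w) (h : mk w ∈ H) : PathIn H V (invRev w) := by
  rintro p ⟨q, hq⟩
  have hw' : w = FreeGroup.invRev q ++ FreeGroup.invRev p := by
    rw [← invRev_append, hq, invRev_invRev]
  convert hw (FreeGroup.invRev q) ⟨_, hw'.symm⟩ using 1
  rw [schreierVertex, schreierVertex, QuotientGroup.eq, ← inv_mem_iff]
  rw [hw', ← mul_mk, ← inv_mk, ← inv_mk] at h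
  rwa [← inv_mk, inv_inv, inv_inv, mul_inv_rev]

/-- For a finitely generated subgroup `H`, the reduced words representing elements of `H` label
paths in a finite part of the Schreier graph of `H`. -/
theorem exists_finite_pathIn_toWord [DecidableEq α] (hfg : H.FG) :
    ∃ V : Set (FreeGroup α ⧸ H), V.Finite ∧ ∀ g ∈ H, PathIn H V g.toWord := by
  obtain ⟨S, rfl⟩ := hfg
  set H := Subgroup.closure (S : Set (FreeGroup α))
  let V : Set (FreeGroup α ⧸ H) :=
    ⋃ s ∈ insert 1 (S : Set (FreeGroup α)), schreierVertex H '' {p | p <+: s.toWord}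
  have hV (s) (hs : s ∈ insert 1 (S : Set (FreeGroup α))) : PathIn H V s.toWord := fun p hp =>
    Set.mem_biUnion hs ⟨p, hp, rfl⟩
  refine ⟨V, (S.finite_toSet.insert 1).biUnion fun s _ => Set.Finite.image _ ?_, fun g hg => ?_⟩
  · exact s.toWord.inits.finite_toSet.subset fun p hp => by simpa using hp
  · suffices ∃ w, mk w = g ∧ PathIn H V w by
      obtain ⟨w, rfl, hw⟩ := this
      exact hw.of_red reduce.red
    induction hg using Subgroup.closure_induction with
    | mem s hs => exact ⟨s.toWord, mk_toWord, hV s (Or.inr hs)⟩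
    | one => exact ⟨_, mk_toWord, hV 1 (Or.inl rfl)⟩
    | mul x y hx _ ihx ihy =>
      obtain ⟨v, rfl, hv⟩ := ihx
      obtain ⟨w, rfl, hw⟩ := ihy
      exact ⟨v ++ w, mul_mk.symm, hv.append hw hx⟩
    | inv x hx ih =>
      obtain ⟨w, rfl, hw⟩ := ih
      exact ⟨FreeGroup.invRev w, inv_mk.symm, hw.invRev hx⟩

/-- The language of reduced words representing elements of `H`. -/
def reducedLanguage (H : Subgroup (FreeGroup α)) : Language (α × Bool) :=
  {w | IsReduced w ∧ mk w ∈ H}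

theorem isReduced_append_iff_getLast? (hv : IsReduced v) :
    IsReduced (v ++ w) ↔ IsReduced (v.getLast?.toList ++ w) := by
  unfold IsReduced at *
  rw [List.isChain_append, List.isChain_append]
  cases v.getLast? <;> simp [hv]

/-- The language of reduced words representing elements of a finitely generated subgroup of a
free group of finite rank is regular. -/
theorem isRegular_reducedLanguage [Finite α] (hfg : H.FG) : (reducedLanguage H).IsRegular := by
  classical
  obtain ⟨V, hV, hH⟩ := exists_finite_pathIn_toWord hfg
  let Q : (FreeGroup α ⧸ H) × Option (α × Bool) → Language (α × Bool) := fun x =>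
    {y | IsReduced (x.2.toList ++ y) ∧ x.1 = (mk y : FreeGroup α)}
  refine .of_finite_range_leftQuotient
    ((((hV.prod Set.finite_univ).image Q).insert (0 : Language (α × Bool))).subset ?_)
  rintro _ ⟨x, rfl⟩
  by_cases hx : ∃ y, x ++ y ∈ reducedLanguage H
  · obtain ⟨y, hred, hmem⟩ := hx
    have hxred : IsReduced x := hred.infix (List.prefix_append x y).isInfix
    have hpath := hH _ hmem
    rw [toWord_mk, hred.reduce_eq] at hpath
    refine Or.inr ⟨(schreierVertex H x, x.getLast?),
      ⟨hpath x (List.prefix_append x y), Set.mem_univ _⟩, ?_⟩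
    ext z
    exact and_congr (isReduced_append_iff_getLast? hxred).symm mk_append_mem_iff.symm
  · left
    ext z
    exact iff_of_false (fun hz => hx ⟨z, hz⟩) (Language.notMem_zero z)

theorem card_mem_length_eq [DecidableEq α] (H : Subgroup (FreeGroup α)) (n : ℕ) :
    Nat.card {g : FreeGroup α // g ∈ H ∧ g.toWord.length = n} =
      Nat.card {w : List (α × Bool) // w ∈ reducedLanguage H ∧ w.length = n} :=
  Nat.card_congr
    { toFun g := ⟨g.1.toWord, ⟨isReduced_toWord, by simpa only [mk_toWord] using g.2.1⟩, g.2.2⟩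
      invFun w := ⟨mk w.1, w.2.1.2, by rw [toWord_mk, w.2.1.1.reduce_eq, w.2.2]⟩
      left_inv _ := Subtype.ext mk_toWord
      right_inv w := Subtype.ext w.2.1.1.reduce_eq }

end FreeGroup

/-- If `H` is a finitely generated subgroup of the free group `F_m` (`m ≥ 1`),
then the cogrowth series `H(z) = Σ_{n≥0} |H_n| zⁿ` is a rational power series. -/
theorem cogrowth_rational (m : ℕ) (hm : 1 ≤ m) (H : Subgroup (FreeGroup (Fin m)))
    (hfg : H.FG) :
    ∃ p q : Polynomial ℚ, q.coeff 0 ≠ 0 ∧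
      (q : PowerSeries ℚ) * PowerSeries.mk (fun n => (cogrowthCoeff m H n : ℚ)) =
        (p : PowerSeries ℚ) := by
  simpa only [cogrowthCoeff, FreeGroup.card_mem_length_eq] using
    (FreeGroup.isRegular_reducedLanguage hfg).exists_mul_mk_card_eq
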